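/- Let ε > 0 and let w^{SAM} be any global maximizer over ℝ of the SAM objective g_ε(w) = min_{δ ∈ [−ε, ε]} u(w + δ). Then w^{SAM} > w₁*, where w₁* = (ln p − ln(1 − p))/(2η) is the unique global maximizer of u. Consequently the robust feature weight of SAM exceeds that of standard training: w^{SAM}/n > w₁*/n. (Theorem 4.3, sharpness-aware minimization.) -/

import Mathlib

/-!
Write `w₁ = (log p - log (1 - p)) / (2 η)`, which is positive because `p > 1/2`. Completing the
exponents gives, for a constant `K > 0`,
`u'(w) = K · exp (-w² / (2n)) · (exp (η (w₁ - w)) - exp (-(η (w₁ - w))))`  (`hasDerivAt_u`),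
so `u` increases strictly up to `w₁` and decreases strictly after it. The second factor of `u'` is
odd about `w₁` while the Gaussian factor is larger on the left of `w₁ > 0`; hence
`u (w₁ - t) < u (w₁ + t)` for all `t > 0` (`reflect_lt`).

If `w ≤ w₁`, then `g w ≤ u (w - ε) ≤ u (w₁ - ε)`. By continuity `u (w₁ + s + ε) > u (w₁ - ε)` for
some small `s ∈ (0, ε)`, and `u (w₁ + s - ε) > u (w₁ - ε)` by monotonicity. Unimodality bounds `g`
below by the values of `u` at the two ends of the window, so `g (w₁ + s) > u (w₁ - ε) ≥ g w`, and
`w` is not a maximizer of `g`.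
-/

/-- The standard normal CDF. -/
noncomputable def Phi (t : ℝ) : ℝ :=
  (Real.sqrt (2 * Real.pi))⁻¹ * ∫ s in Set.Iic t, Real.exp (-(s ^ 2) / 2)

/-- The expected clean accuracy `u(w)` for parameters `p`, `η`, `n`. -/
noncomputable def u (p η : ℝ) (n : ℕ) (w : ℝ) : ℝ :=
  p * Phi ((w + η * n) / Real.sqrt n) + (1 - p) * Phi ((-w + η * n) / Real.sqrt n)

/-- The SAM objective with weight-perturbation radius `ε`. -/
noncomputable def g (p η : ℝ) (n : ℕ) (ε w : ℝ) : ℝ :=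
  sInf ((fun δ : ℝ => u p η n (w + δ)) '' Set.Icc (-ε) ε)

lemma hasDerivAt_Phi (t : ℝ) :
    HasDerivAt Phi ((Real.sqrt (2 * Real.pi))⁻¹ * Real.exp (-(t ^ 2) / 2)) t := by
  have hint : MeasureTheory.Integrable (fun s : ℝ => Real.exp (-(s ^ 2) / 2)) := by
    convert integrable_exp_neg_mul_sq (b := 1 / 2) (by norm_num) using 3
    ring
  have hcont : Continuous (fun s : ℝ => Real.exp (-(s ^ 2) / 2)) := by fun_prop
  have heq : Phi = fun t => (Real.sqrt (2 * Real.pi))⁻¹ *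
      ((∫ s in Set.Iic (0 : ℝ), Real.exp (-(s ^ 2) / 2)) +
        ∫ s in (0 : ℝ)..t, Real.exp (-(s ^ 2) / 2)) := by
    funext t
    have h := intervalIntegral.integral_Iic_sub_Iic (a := (0 : ℝ)) (b := t)
      hint.integrableOn hint.integrableOn
    rw [Phi, ← h]
    ring
  rw [heq]
  exact ((intervalIntegral.integral_hasDerivAt_right (hcont.intervalIntegrable _ _)
    (hcont.stronglyMeasurableAtFilter _ _) hcont.continuousAt).const_add _).const_mul _

/-- With `w₁` the maximizer of `u`, the derivative of `u` is a Gaussian factor times a factor that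
is odd about `w₁`. -/
lemma hasDerivAt_u (p η : ℝ) (n : ℕ) (hp : 1 / 2 < p) (hp1 : p < 1) (hη : 0 < η) (hn : 0 < n)
    (w₁ : ℝ) (hw₁ : w₁ = (Real.log p - Real.log (1 - p)) / (2 * η)) :
    ∃ K : ℝ, 0 < K ∧ ∀ w, HasDerivAt (u p η n)
      (K * Real.exp (-(w ^ 2) / (2 * n)) *
        (Real.exp (η * (w₁ - w)) - Real.exp (-(η * (w₁ - w))))) w := by
  have hn' : (0 : ℝ) < n := by exact_mod_cast hn
  have hs : 0 < Real.sqrt n := Real.sqrt_pos.2 hn'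
  have hsq : Real.sqrt n ^ 2 = n := Real.sq_sqrt hn'.le
  have hL : 2 * (η * w₁) = Real.log p - Real.log (1 - p) := by
    rw [hw₁]; field_simp
  -- The factor `√(p (1 - p)) exp (-η² n / 2)` is common to both terms of the derivative.
  refine ⟨(Real.sqrt (2 * Real.pi))⁻¹ * (Real.sqrt n)⁻¹ *
    Real.exp ((Real.log p + Real.log (1 - p)) / 2 - η ^ 2 * n / 2), by positivity, fun w => ?_⟩
  have h1 : HasDerivAt (fun w : ℝ => (w + η * n) / Real.sqrt n) (1 / Real.sqrt n) w :=
    ((hasDerivAt_id w).add_const _).div_const _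
  have h2 : HasDerivAt (fun w : ℝ => (-w + η * n) / Real.sqrt n) (-1 / Real.sqrt n) w :=
    ((hasDerivAt_id w).neg.add_const _).div_const _
  have h := (((hasDerivAt_Phi _).comp w h1).const_mul p).add
    (((hasDerivAt_Phi _).comp w h2).const_mul (1 - p))
  have e1 : p * Real.exp (-(((w + η * n) / Real.sqrt n) ^ 2) / 2) =
      Real.exp ((Real.log p + Real.log (1 - p)) / 2 - η ^ 2 * n / 2) *
        Real.exp (-(w ^ 2) / (2 * n)) * Real.exp (η * (w₁ - w)) := by
    nth_rewrite 1 [← Real.exp_log (show 0 < p by linarith)]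
    rw [← Real.exp_add, ← Real.exp_add, ← Real.exp_add, div_pow, hsq]
    congr 1
    have : η * (w₁ - w) = (Real.log p - Real.log (1 - p)) / 2 - η * w := by linarith
    rw [this]
    field_simp
    ring
  have e2 : (1 - p) * Real.exp (-(((-w + η * n) / Real.sqrt n) ^ 2) / 2) =
      Real.exp ((Real.log p + Real.log (1 - p)) / 2 - η ^ 2 * n / 2) *
        Real.exp (-(w ^ 2) / (2 * n)) * Real.exp (-(η * (w₁ - w))) := by
    nth_rewrite 1 [← Real.exp_log (show 0 < 1 - p by linarith)]
    rw [← Real.exp_add, ← Real.exp_add, ← Real.exp_add, div_pow, hsq]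
    congr 1
    have : η * (w₁ - w) = (Real.log p - Real.log (1 - p)) / 2 - η * w := by linarith
    rw [this]
    field_simp
    ring
  refine HasDerivAt.congr_deriv (f := u p η n) h ?_
  linear_combination (Real.sqrt (2 * Real.pi))⁻¹ * (Real.sqrt n)⁻¹ * e1 -
    (Real.sqrt (2 * Real.pi))⁻¹ * (Real.sqrt n)⁻¹ * e2

/-- The abstract form of the reflection inequality: if `f'` is a Gaussian factor times a factor odd
about `a > 0`, then `f` falls off more slowly to the right of `a` than to the left. -/
lemma reflect_lt {f : ℝ → ℝ} {K η a N : ℝ} (hK : 0 < K) (hη : 0 < η) (ha : 0 < a) (hN : 0 < N)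
    (hf : ∀ w, HasDerivAt f (K * Real.exp (-(w ^ 2) / (2 * N)) *
        (Real.exp (η * (a - w)) - Real.exp (-(η * (a - w))))) w)
    {t : ℝ} (ht : 0 < t) : f (a - t) < f (a + t) := by
  have hd : ∀ x, HasDerivAt (fun x => f (a + x) - f (a - x))
      (K * (Real.exp (-((a - x) ^ 2) / (2 * N)) - Real.exp (-((a + x) ^ 2) / (2 * N))) *
        (Real.exp (η * x) - Real.exp (-(η * x)))) x := by
    intro x
    have h := ((hf (a + x)).comp x ((hasDerivAt_id x).const_add a)).sub
      ((hf (a - x)).comp x ((hasDerivAt_id x).const_sub a))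
    refine HasDerivAt.congr_deriv h ?_
    rw [show η * (a - (a + x)) = -(η * x) by ring, show η * (a - (a - x)) = η * x by ring, neg_neg]
    ring
  have hmono : StrictMonoOn (fun x => f (a + x) - f (a - x)) (Set.Ici 0) := by
    refine strictMonoOn_of_deriv_pos (convex_Ici 0)
      (fun x _ => (hd x).continuousAt.continuousWithinAt) fun x hx => ?_
    rw [interior_Ici, Set.mem_Ioi] at hx
    rw [(hd x).deriv]
    refine mul_pos (mul_pos hK (sub_pos.2 (Real.exp_lt_exp.2 ?_))) (sub_pos.2 (Real.exp_lt_exp.2 ?_))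
    · refine div_lt_div_of_pos_right ?_ (by positivity)
      nlinarith [mul_pos ha hx]
    · nlinarith [mul_pos hη hx]
  have h := hmono (Set.mem_Ici.2 le_rfl) (Set.mem_Ici.2 ht.le) ht
  simp only [add_zero, sub_zero, sub_self] at h
  linarith


/-- Theorem 4.3 (SAM): any global maximizer `wSAM` of the SAM objective exceeds
`w₁* = (ln p − ln(1−p))/(2η)`, hence the SAM robust feature weight `wSAM/n` exceeds the
standard-training robust feature weight `w₁*/n`. -/
theorem sam_robust_feature_weight
    (p η : ℝ) (n : ℕ) (hp : 1 / 2 < p) (hp1 : p < 1) (hη : 0 < η) (hn : 0 < n)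
    (ε : ℝ) (hε : 0 < ε) (wSAM : ℝ) (hmax : ∀ w : ℝ, g p η n ε w ≤ g p η n ε wSAM) :
    (Real.log p - Real.log (1 - p)) / (2 * η) < wSAM ∧
    ((Real.log p - Real.log (1 - p)) / (2 * η)) / n < wSAM / n := by
  have hn' : (0 : ℝ) < n := by exact_mod_cast hn
  suffices h : (Real.log p - Real.log (1 - p)) / (2 * η) < wSAM from
    ⟨h, div_lt_div_of_pos_right h hn'⟩
  obtain ⟨a, ha⟩ : ∃ a, a = (Real.log p - Real.log (1 - p)) / (2 * η) := ⟨_, rfl⟩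
  have ha0 : 0 < a := by
    rw [ha]
    have := Real.log_lt_log (show 0 < 1 - p by linarith) (show 1 - p < p by linarith)
    exact div_pos (by linarith) (by linarith)
  obtain ⟨K, hK, hd⟩ := hasDerivAt_u p η n hp hp1 hη hn a ha
  rw [← ha]
  have hcont : Continuous (u p η n) :=
    continuous_iff_continuousAt.2 fun w => (hd w).continuousAt
  have hmono : StrictMonoOn (u p η n) (Set.Iic a) := by
    refine strictMonoOn_of_deriv_pos (convex_Iic a) hcont.continuousOn fun x hx => ?_
    rw [interior_Iic, Set.mem_Iio] at hx
    rw [(hd x).deriv]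
    have := mul_pos hη (sub_pos.2 hx)
    exact mul_pos (by positivity) (sub_pos.2 (Real.exp_lt_exp.2 (by linarith)))
  have hanti : StrictAntiOn (u p η n) (Set.Ici a) := by
    refine strictAntiOn_of_deriv_neg (convex_Ici a) hcont.continuousOn fun x hx => ?_
    rw [interior_Ici, Set.mem_Ioi] at hx
    rw [(hd x).deriv]
    have := mul_pos hη (sub_pos.2 hx)
    exact mul_neg_of_pos_of_neg (by positivity)
      (sub_neg.2 (Real.exp_lt_exp.2 (by linarith)))
  -- Unimodality: on the perturbation window, `u` is at least its smaller endpoint value.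
  have hlow : ∀ w, ∀ δ ∈ Set.Icc (-ε) ε,
      min (u p η n (w - ε)) (u p η n (w + ε)) ≤ u p η n (w + δ) := by
    intro w δ hδ
    rcases le_total (w + δ) a with h | h
    · exact (min_le_left _ _).trans (hmono.monotoneOn
        (Set.mem_Iic.2 (by linarith [hδ.1])) h (by linarith [hδ.1]))
    · exact (min_le_right _ _).trans (hanti.antitoneOn h
        (Set.mem_Ici.2 (by linarith [hδ.2])) (by linarith [hδ.2]))
  have hg_ge : ∀ w, min (u p η n (w - ε)) (u p η n (w + ε)) ≤ g p η n ε w := by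
    intro w
    refine le_csInf ((Set.nonempty_Icc.2 (by linarith)).image _) ?_
    rintro _ ⟨δ, hδ, rfl⟩
    exact hlow w δ hδ
  have hg_le : ∀ w, g p η n ε w ≤ u p η n (w - ε) := by
    intro w
    refine csInf_le ⟨min (u p η n (w - ε)) (u p η n (w + ε)), ?_⟩
      ⟨-ε, ⟨le_rfl, by linarith⟩, by simp [sub_eq_add_neg]⟩
    rintro _ ⟨δ, hδ, rfl⟩
    exact hlow w δ hδ
  by_contra! hle
  have hrefl : u p η n (a - ε) < u p η n (a + ε) := reflect_lt hK hη ha0 hn' hd hε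
  obtain ⟨s, hs, hs0, hsε⟩ : ∃ s, u p η n (a - ε) < u p η n (a + s + ε) ∧ 0 < s ∧ s < ε := by
    have hc : ContinuousAt (fun s => u p η n (a + s + ε)) 0 := by fun_prop
    have hev := hc.eventually (lt_mem_nhds (a := u p η n (a - ε)) (by simpa using hrefl))
    exact ((hev.filter_mono nhdsWithin_le_nhds).and (Ioo_mem_nhdsGT hε)).exists
  have h1 : u p η n (a - ε) < u p η n (a + s - ε) :=
    hmono (Set.mem_Iic.2 (by linarith)) (Set.mem_Iic.2 (by linarith)) (by linarith)
  have h2 : u p η n (wSAM - ε) ≤ u p η n (a - ε) :=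
    hmono.monotoneOn (Set.mem_Iic.2 (by linarith)) (Set.mem_Iic.2 (by linarith)) (by linarith)
  exact absurd (hmax (a + s)) (not_le.2
    (((hg_le wSAM).trans h2).trans_lt ((lt_min h1 hs).trans_le (hg_ge (a + s)))))
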